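/- arXiv:math/0311467 — 2 statements merged into one kernel-verified Lean document; each statement's English description precedes it below -/
import Mathlib

section
/- Assume additionally that c_j ≠ c for all 1 < j < l. Then the Benlolo–Sanderson element f is irreducible in the polynomial ring R (in particular f is nonzero and not a unit). -/
open Finset MvPolynomial

noncomputable section

/-- Sum of the first `j` block sizes (blocks are 1-indexed). -/
def blkSum (c : ℕ → ℕ) (j : ℕ) : ℕ := ∑ i ∈ Finset.Icc 1 j, c i

/-- Block index of `a ∈ {1,…,n}`: the least `j` with `a ≤ c 1 + ⋯ + c j`. -/
def blk (c : ℕ → ℕ) (a : ℕ) : ℕ := sInf {j | a ≤ blkSum c j}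

/-- The index set `P` of positions of the nilradical `m`: pairs `(a, b)` of indices
(0-indexed here, representing the 1-indexed pair `(a+1, b+1)`) with `b < a` and
`blk (b+1) < blk (a+1)`. -/
abbrev Pos (c : ℕ → ℕ) (n : ℕ) : Type :=
  {p : Fin n × Fin n // p.2 < p.1 ∧ blk c (p.2.1 + 1) < blk c (p.1.1 + 1)}

/-- The generic matrix `𝒳` of the nilradical `m`. -/
def genX (c : ℕ → ℕ) (n : ℕ) : Matrix (Fin n) (Fin n) (MvPolynomial (Pos c n) ℂ) :=
  Matrix.of fun a b =>
    if h : b < a ∧ blk c (b.1 + 1) < blk c (a.1 + 1) then X (⟨(a, b), h⟩ : Pos c n) else 0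

/-- The matrix `M(t)`: the `(n-c) × (n-c)` submatrix of `𝒳 + t · Id` consisting of
rows `c+1, …, n` and columns `1, …, n-c`, viewed over `R[t]`.  Here `m = n - c`. -/
def Mmat (c : ℕ → ℕ) (n m : ℕ) (h : m + c 1 = n) :
    Matrix (Fin m) (Fin m) (Polynomial (MvPolynomial (Pos c n) ℂ)) :=
  Matrix.of fun i j =>
    Polynomial.C (genX c n (Fin.cast h (i.addNat (c 1)))
        (Fin.castLE (le_trans (Nat.le_add_right m (c 1)) (le_of_eq h)) j))
      + if (Fin.cast h (i.addNat (c 1)) : Fin n)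
            = Fin.castLE (le_trans (Nat.le_add_right m (c 1)) (le_of_eq h)) j
        then Polynomial.X else 0

/-- `d := Σᵢ max (cᵢ - c, 0)` (truncated subtraction). -/
def dBS (c : ℕ → ℕ) (l : ℕ) : ℕ := ∑ i ∈ Finset.Icc 1 l, (c i - c 1)

/-- The Benlolo–Sanderson element: the coefficient of `t^d` in `det M(t)`. -/
def BSf (c : ℕ → ℕ) (l n m : ℕ) (h : m + c 1 = n) : MvPolynomial (Pos c n) ℂ :=
  ((Mmat c n m h).det).coeff (dBS c l)

/-- The point of the nilradical determined by `ξ : P → ℂ`. -/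
def Xpt (c : ℕ → ℕ) (n : ℕ) (ξ : Pos c n → ℂ) : Matrix (Fin n) (Fin n) ℂ :=
  Matrix.of fun a b =>
    if h : b < a ∧ blk c (b.1 + 1) < blk c (a.1 + 1) then ξ ⟨(a, b), h⟩ else 0

/-! A nonzero term of the Leibniz expansion of `det M(t)` is a system of `c` disjoint paths from the
first block to the last one, an arc `b → a` standing for `x_{ab}`, together with a factor `t` (a
loop) for each vertex off the paths. Block `k` contains at least `c_k - c` loops, so `d` is the
least number of loops, and `f` is the signed sum of the squarefree monomials of the systems
attaining it, the *tight* ones; distinct systems give distinct monomials.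

As `f` has degree at most one in each variable, the factors of `f = g h` involve disjoint sets of
variables `G` and `H`, and the `G`-part of any monomial of `f` can be combined with the `H`-part of
any other one. So a `G`-arc and an `H`-arc always lie in a common system, hence have different
sources and different targets. Two exchanges then transport membership in `G`. If both arcs of a
tight system can swap their targets, they lie on the same side. If a path passes through a vertex
of a block that also contains a loop, it can be detoured through the looped vertex instead, which
puts the arc entering and the arc leaving the vertex on the same side. When `c_k ≠ c`, some path
jumps over block `k` (if `c_k < c`) or block `k` contains a loop (if `c_k > c`), so by induction on
`k` every arc leaving block `k` lies on the side of the arcs leaving block `1`, and the other side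
is empty. -/

/-- A splitting of a family `𝓕` of finite sets: its ground set `⋃ 𝓕` is the disjoint union of `G`
and `H`, and the traces of members of `𝓕` on `G` and on `H` can be combined freely. The supports of
the monomials of a product of polynomials in disjoint sets of variables have this shape. -/
structure IsSplitting {σ : Type*} [DecidableEq σ] (𝓕 : Set (Finset σ)) (G H : Finset σ) :
    Prop where
  disjoint : Disjoint G H
  mem_or_mem_iff : ∀ x, x ∈ G ∨ x ∈ H ↔ ∃ A ∈ 𝓕, x ∈ A
  mix_mem : ∀ A ∈ 𝓕, ∀ B ∈ 𝓕, A ∩ G ∪ B ∩ H ∈ 𝓕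

namespace IsSplitting

variable {σ : Type*} [DecidableEq σ] {𝓕 : Set (Finset σ)} {G H : Finset σ}

theorem symm (h : IsSplitting 𝓕 G H) : IsSplitting 𝓕 H G where
  disjoint := h.disjoint.symm
  mem_or_mem_iff x := or_comm.trans (h.mem_or_mem_iff x)
  mix_mem A hA B hB := union_comm (B ∩ G) (A ∩ H) ▸ h.mix_mem B hB A hA

theorem exists_mem_mem (h : IsSplitting 𝓕 G H) {x y : σ} (hx : x ∈ G) (hy : y ∈ H) :
    ∃ A ∈ 𝓕, x ∈ A ∧ y ∈ A := by
  obtain ⟨A, hA, hxA⟩ := (h.mem_or_mem_iff x).1 (.inl hx)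
  obtain ⟨B, hB, hyB⟩ := (h.mem_or_mem_iff y).1 (.inr hy)
  exact ⟨_, h.mix_mem A hA B hB, by simp [hxA, hx], by simp [hyB, hy]⟩

end IsSplitting

section DisjointVars

variable {σ R : Type*}

theorem finsupp_add_inj_of_disjoint {M : Type*} [AddZeroClass M] {G H : Finset σ}
    (hGH : Disjoint G H) {u u' v v' : σ →₀ M} (hu : u.support ⊆ G) (hu' : u'.support ⊆ G)
    (hv : v.support ⊆ H) (hv' : v'.support ⊆ H) (h : u + v = u' + v') : u = u' ∧ v = v' := by
  have hpt (x : σ) : u x = u' x ∧ v x = v' x := by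
    have hx : u x + v x = u' x + v' x := DFunLike.congr_fun h x
    by_cases hxG : x ∈ G
    · have hxH := disjoint_left.1 hGH hxG
      have h0 := Finsupp.notMem_support_iff.1 fun hm => hxH (hv hm)
      have h0' := Finsupp.notMem_support_iff.1 fun hm => hxH (hv' hm)
      simpa [h0, h0'] using hx
    · have h0 := Finsupp.notMem_support_iff.1 fun hm => hxG (hu hm)
      have h0' := Finsupp.notMem_support_iff.1 fun hm => hxG (hu' hm)
      simpa [h0, h0'] using hx
  exact ⟨Finsupp.ext fun x => (hpt x).1, Finsupp.ext fun x => (hpt x).2⟩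

theorem support_subset_vars [CommSemiring R] {p : MvPolynomial σ R} {u : σ →₀ ℕ}
    (hu : u ∈ p.support) : u.support ⊆ p.vars :=
  fun x hx => (mem_vars_iff_mem_support x).2 ⟨u, hu, hx⟩

theorem coeff_add_mul_of_disjoint_vars [CommSemiring R] {g h : MvPolynomial σ R}
    (hgh : Disjoint g.vars h.vars) {u v : σ →₀ ℕ} (hu : u.support ⊆ g.vars)
    (hv : v.support ⊆ h.vars) : (g * h).coeff (u + v) = g.coeff u * h.coeff v := by
  classical
  rw [coeff_mul]
  refine Finset.sum_eq_single (u, v) ?_ fun hnot => (hnot (by simp)).elim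
  rintro ⟨u', v'⟩ huv hne
  by_contra hcoeff
  have hu' := support_subset_vars (mem_support_iff.2 (left_ne_zero_of_mul hcoeff))
  have hv' := support_subset_vars (mem_support_iff.2 (right_ne_zero_of_mul hcoeff))
  obtain ⟨rfl, rfl⟩ :=
    finsupp_add_inj_of_disjoint hgh hu' hu hv' hv (mem_antidiagonal.1 huv)
  exact hne rfl

theorem add_mem_support_mul_of_disjoint_vars [CommSemiring R] [NoZeroDivisors R]
    {g h : MvPolynomial σ R} (hgh : Disjoint g.vars h.vars) {u v : σ →₀ ℕ} (hu : u ∈ g.support)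
    (hv : v ∈ h.support) : u + v ∈ (g * h).support := by
  rw [mem_support_iff, coeff_add_mul_of_disjoint_vars hgh (support_subset_vars hu)
    (support_subset_vars hv)]
  exact mul_ne_zero (mem_support_iff.1 hu) (mem_support_iff.1 hv)

theorem disjoint_vars_of_degreeOf_mul_le_one [CommSemiring R] [NoZeroDivisors R]
    {g h : MvPolynomial σ R} (hgh : g * h ≠ 0) (hdeg : ∀ x, (g * h).degreeOf x ≤ 1) :
    Disjoint g.vars h.vars := by
  refine disjoint_left.2 fun x hg hh => ?_
  rw [mem_vars_iff_degreeOf_ne_zero] at hg hh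
  have hx := hdeg x
  rw [degreeOf_mul_eq (left_ne_zero_of_mul hgh) (right_ne_zero_of_mul hgh)] at hx
  omega

/-- The sets of variables of the monomials of a polynomial. -/
def monomialSupports [CommSemiring R] (f : MvPolynomial σ R) : Set (Finset σ) :=
  Finsupp.support '' (f.support : Set (σ →₀ ℕ))

theorem support_add_inter_vars [CommSemiring R] [DecidableEq σ] {g h : MvPolynomial σ R}
    (hgh : Disjoint g.vars h.vars) {u v : σ →₀ ℕ} (hu : u ∈ g.support) (hv : v ∈ h.support) :
    (u + v).support ∩ g.vars = u.support := by
  have hu' := support_subset_vars hu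
  have hv' := support_subset_vars hv
  rw [Finsupp.support_add_eq (hgh.mono hu' hv'), union_inter_distrib_right,
    inter_eq_left.2 hu', disjoint_iff_inter_eq_empty.1 (hgh.symm.mono_left hv'), union_empty]

theorem isSplitting_vars [CommSemiring R] [NoZeroDivisors R] [DecidableEq σ]
    {g h : MvPolynomial σ R} (hgh : g * h ≠ 0) (hdisj : Disjoint g.vars h.vars) :
    IsSplitting (monomialSupports (g * h)) g.vars h.vars where
  disjoint := hdisj
  mem_or_mem_iff x := by
    have hvars : x ∈ g.vars ∨ x ∈ h.vars ↔ x ∈ (g * h).vars := by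
      simp only [mem_vars_iff_degreeOf_ne_zero,
        degreeOf_mul_eq (left_ne_zero_of_mul hgh) (right_ne_zero_of_mul hgh)]
      omega
    rw [hvars, mem_vars_iff_mem_support]
    exact (Set.exists_mem_image (p := fun A : Finset σ => x ∈ A)).symm
  mix_mem := by
    rintro _ ⟨s, hs, rfl⟩ _ ⟨t, ht, rfl⟩
    obtain ⟨u, hu, v, hv, rfl⟩ := mem_add.1 (support_mul _ _ hs)
    obtain ⟨u', hu', v', hv', rfl⟩ := mem_add.1 (support_mul _ _ ht)
    refine ⟨u + v', add_mem_support_mul_of_disjoint_vars hdisj hu hv', ?_⟩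
    rw [support_add_inter_vars hdisj hu hv, add_comm u', support_add_inter_vars hdisj.symm hv' hu',
      Finsupp.support_add_eq (hdisj.mono (support_subset_vars hu) (support_subset_vars hv'))]

theorem isUnit_of_vars_eq_empty_of_dvd [CommSemiring R] {f h : MvPolynomial σ R}
    (hh : h.vars = ∅) (hdvd : h ∣ f) {u : σ →₀ ℕ} (hu : IsUnit (f.coeff u)) : IsUnit h := by
  obtain ⟨g, rfl⟩ := hdvd
  rw [vars_eq_empty_iff_eq_C] at hh
  rw [hh, coeff_C_mul] at hu
  rw [hh]
  exact (isUnit_of_mul_isUnit_left hu).map C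

theorem irreducible_of_forall_isSplitting [CommRing R] [IsDomain R] [DecidableEq σ]
    {f : MvPolynomial σ R} (hvars : f.vars.Nonempty) (hdeg : ∀ x, f.degreeOf x ≤ 1)
    (hunit : ∃ u, IsUnit (f.coeff u))
    (hsplit : ∀ G H, IsSplitting (monomialSupports f) G H → G = ∅ ∨ H = ∅) :
    Irreducible f where
  not_isUnit hf := by
    obtain ⟨a, -, rfl⟩ := isUnit_iff_eq_C_of_isReduced.1 hf
    simp at hvars
  isUnit_or_isUnit := by
    rintro g h rfl
    obtain ⟨u, hu⟩ := hunit
    have hgh : g * h ≠ 0 := by rintro hgh; simp [hgh] at hvars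
    have hdisj := disjoint_vars_of_degreeOf_mul_le_one hgh hdeg
    exact (hsplit _ _ (isSplitting_vars hgh hdisj)).imp
      (isUnit_of_vars_eq_empty_of_dvd · (dvd_mul_right g h) hu)
      (isUnit_of_vars_eq_empty_of_dvd · (dvd_mul_left h g) hu)

end DisjointVars

section SumProdX

variable {σ R : Type*} [DecidableEq σ] [CommRing R]

theorem prod_X_eq_monomial (A : Finset σ) :
    ∏ x ∈ A, (X x : MvPolynomial σ R) = monomial A.1.toFinsupp 1 := by
  rw [monomial_eq, C_1, one_mul, Finsupp.prod, Multiset.toFinsupp_support, val_toFinset]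
  refine prod_congr rfl fun x hx => ?_
  rw [Multiset.toFinsupp_apply, Multiset.count_eq_one_of_mem A.nodup hx, pow_one]

variable {κ : Type*} {s : Finset κ} {A : κ → Finset σ} {a : κ → R}

theorem coeff_sum_C_mul_prod_X (hA : Set.InjOn A s) {k : κ} (hk : k ∈ s) :
    (∑ i ∈ s, C (a i) * ∏ x ∈ A i, X x).coeff (A k).1.toFinsupp = a k := by
  simp only [prod_X_eq_monomial, C_mul_monomial, mul_one, coeff_sum, coeff_monomial,
    EmbeddingLike.apply_eq_iff_eq, val_inj]
  rw [sum_eq_single_of_mem k hk fun i hi hik => if_neg fun h => hik (hA hi hk h), if_pos rfl]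

theorem exists_eq_toFinsupp_of_mem_support {u : σ →₀ ℕ}
    (hu : u ∈ (∑ i ∈ s, C (a i) * ∏ x ∈ A i, X x).support) :
    ∃ k ∈ s, u = (A k).1.toFinsupp := by
  obtain ⟨k, hk, hku⟩ := mem_biUnion.1 (support_sum hu)
  rw [prod_X_eq_monomial, C_mul_monomial] at hku
  exact ⟨k, hk, mem_singleton.1 (support_monomial_subset hku)⟩

theorem irreducible_sum_C_mul_prod_X [IsDomain R] (hA : Set.InjOn A s)
    (ha : ∀ k ∈ s, IsUnit (a k)) (hne : ∃ k ∈ s, (A k).Nonempty)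
    (hsplit : ∀ G H, IsSplitting (A '' s) G H → G = ∅ ∨ H = ∅) :
    Irreducible (∑ i ∈ s, C (a i) * ∏ x ∈ A i, X x) := by
  set f := ∑ i ∈ s, C (a i) * ∏ x ∈ A i, X x
  have hcoeff : ∀ k ∈ s, f.coeff (A k).1.toFinsupp = a k := fun k hk =>
    coeff_sum_C_mul_prod_X hA hk
  have hmem : ∀ k ∈ s, (A k).1.toFinsupp ∈ f.support := fun k hk =>
    mem_support_iff.2 (hcoeff k hk ▸ (ha k hk).ne_zero)
  have hsupports : monomialSupports f = A '' s := by
    refine Set.Subset.antisymm ?_ ?_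
    · rintro _ ⟨u, hu, rfl⟩
      obtain ⟨k, hk, rfl⟩ := exists_eq_toFinsupp_of_mem_support hu
      exact ⟨k, hk, by simp⟩
    · rintro _ ⟨k, hk, rfl⟩
      exact ⟨_, hmem k hk, by simp⟩
  obtain ⟨k, hk, x, hx⟩ := hne
  refine irreducible_of_forall_isSplitting ⟨x, ?_⟩ (fun y => ?_) ⟨_, hcoeff k hk ▸ ha k hk⟩
    (hsupports ▸ hsplit)
  · exact (mem_vars_iff_mem_support x).2 ⟨_, hmem k hk, by simpa using hx⟩
  · refine degreeOf_le_iff.2 fun u hu => ?_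
    obtain ⟨i, -, rfl⟩ := exists_eq_toFinsupp_of_mem_support hu
    exact Multiset.nodup_iff_count_le_one.1 (A i).nodup y

end SumProdX

theorem card_filter_comp_of_forall_mem_range {α β : Type*} [Fintype α] [Fintype β] (f : α ↪ β)
    (p : β → Prop) [DecidablePred p] (hp : ∀ b, p b → b ∈ Set.range f) :
    #{a | p (f a)} = #{b | p b} := by
  rw [← card_map f]
  congr 1
  ext b
  simp only [mem_map, mem_filter_univ]
  refine ⟨?_, fun hb => ?_⟩
  · rintro ⟨a, ha, rfl⟩
    exact ha
  · obtain ⟨a, rfl⟩ := hp b hb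
    exact ⟨a, hb, rfl⟩

theorem exists_perm_rotate {α : Type*} (τ : Equiv.Perm α) {x y z : α}
    (hxy : x ≠ y) (hyz : y ≠ z) (hzx : z ≠ x) :
    ∃ τ' : Equiv.Perm α, τ' x = τ y ∧ τ' y = τ z ∧ τ' z = τ x ∧
      ∀ w, w ≠ x → w ≠ y → w ≠ z → τ' w = τ w := by
  classical
  refine ⟨τ * (Equiv.swap x y * Equiv.swap y z), ?_, ?_, ?_, fun w hwx hwy hwz => ?_⟩
  · simp [Equiv.swap_apply_of_ne_of_ne hxy hzx.symm]
  · simp [Equiv.swap_apply_of_ne_of_ne hzx hyz.symm]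
  · simp
  · simp [Equiv.swap_apply_of_ne_of_ne, hwx, hwy, hwz]

/-- A finite vertex set cut into blocks `1, …, l`, with a common index type for the vertices that
may start an arc (`col`, those outside block `l`) and for those that may end one (`row`, those
outside block `1`). It records which rows and columns of `𝒳 + t · Id` form the minor `M(t)`. -/
structure BlockLayout (ι W : Type*) where
  block : W → ℕ
  numBlocks : ℕ
  col : ι ↪ W
  row : ι ↪ W
  mem_Icc_block : ∀ w, block w ∈ Set.Icc 1 numBlocks
  mem_range_col : ∀ w, w ∈ Set.range col ↔ block w < numBlocks
  mem_range_row : ∀ w, w ∈ Set.range row ↔ 1 < block w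

namespace BlockLayout

variable {ι W : Type*} (S : BlockLayout ι W)

/-- The position `(i, j)` of the minor carries a variable. -/
abbrev IsArc (i j : ι) : Prop := S.block (S.col j) < S.block (S.row i)

/-- The position `(i, j)` of the minor lies on the diagonal of `𝒳 + t · Id`. -/
abbrev IsLoop (i j : ι) : Prop := S.row i = S.col j

/-- The permutations whose term in the Leibniz expansion of `det M(t)` does not vanish. Following
`col j ↦ row (τ j)` from block `1` they are systems of disjoint paths from the first to the last
block, with a loop at each vertex off the paths. -/
def Admissible (τ : Equiv.Perm ι) : Prop := ∀ j, S.IsArc (τ j) j ∨ S.IsLoop (τ j) j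

variable {S} {τ τ' : Equiv.Perm ι} {a i j : ι}

theorem IsLoop.not_isArc (h : S.IsLoop i j) : ¬ S.IsArc i j := by
  rw [IsArc, h]
  exact lt_irrefl _

theorem IsArc.not_isLoop (h : S.IsArc i j) : ¬ S.IsLoop i j := fun h' => h'.not_isArc h

theorem Admissible.isArc_of_not_isLoop (hτ : S.Admissible τ) (h : ¬ S.IsLoop (τ j) j) :
    S.IsArc (τ j) j :=
  (hτ j).resolve_right h

theorem Admissible.block_le (hτ : S.Admissible τ) (j : ι) :
    S.block (S.col j) ≤ S.block (S.row (τ j)) :=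
  (hτ j).elim le_of_lt fun h => (congrArg S.block h).ge

theorem block_col_lt (S : BlockLayout ι W) (j : ι) : S.block (S.col j) < S.numBlocks :=
  (S.mem_range_col _).1 ⟨j, rfl⟩

theorem one_lt_block_row (S : BlockLayout ι W) (i : ι) : 1 < S.block (S.row i) :=
  (S.mem_range_row _).1 ⟨i, rfl⟩

theorem isArc_of_block_col_eq_one (hj : S.block (S.col j) = 1) (i : ι) : S.IsArc i j := by
  rw [IsArc, hj]
  exact S.one_lt_block_row i

theorem Admissible.mul_swap [DecidableEq ι] (hτ : S.Admissible τ) (hj : S.IsArc (τ a) j)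
    (ha : S.IsArc (τ j) a) : S.Admissible (τ * Equiv.swap j a) := by
  intro x
  rw [Equiv.Perm.mul_apply]
  rcases eq_or_ne x j with rfl | hxj
  · exact .inl (by rwa [Equiv.swap_apply_left])
  rcases eq_or_ne x a with rfl | hxa
  · exact .inl (by rwa [Equiv.swap_apply_right])
  · rw [Equiv.swap_apply_of_ne_of_ne hxj hxa]
    exact hτ x

theorem exists_admissible [Finite ι] (S : BlockLayout ι W) : ∃ τ, S.Admissible τ := by
  cases nonempty_fintype ι
  have hrow : ∀ j, ∃ i, 1 < S.block (S.col j) → S.IsLoop i j := fun j => by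
    by_cases hj : 1 < S.block (S.col j)
    · obtain ⟨i, hi⟩ := (S.mem_range_row _).2 hj
      exact ⟨i, fun _ => hi⟩
    · exact ⟨j, fun h => (hj h).elim⟩
  choose g hg using hrow
  have hinj : Set.InjOn g {j | 1 < S.block (S.col j)} := fun j hj j' hj' h =>
    S.col.injective ((hg j hj).symm.trans (h ▸ hg j' hj'))
  obtain ⟨e, he⟩ := Set.MapsTo.exists_equiv_extend_of_card_eq (t := univ) card_univ.symm
    (fun _ _ => mem_coe.2 (mem_univ _)) hinj
  refine ⟨e.trans (Equiv.subtypeUnivEquiv mem_univ), fun j => ?_⟩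
  by_cases hj : 1 < S.block (S.col j)
  · exact .inr ((congrArg S.row (he j hj)).trans (hg j hj))
  · exact .inl ((not_lt.1 hj).trans_lt (S.one_lt_block_row _))

section Counting

variable [Fintype ι] [Fintype W]

variable (S) in
/-- The number of vertices in block `k`. -/
def size (k : ℕ) : ℕ := #{w | S.block w = k}

theorem card_filter_col (S : BlockLayout ι W) {p : ℕ → Prop} [DecidablePred p]
    (hp : ∀ k, p k → k < S.numBlocks) : #{j | p (S.block (S.col j))} = #{w | p (S.block w)} :=
  card_filter_comp_of_forall_mem_range S.col (fun w => p (S.block w))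
    fun w hw => (S.mem_range_col w).2 (hp _ hw)

theorem card_filter_row_apply (S : BlockLayout ι W) (τ : Equiv.Perm ι) {p : ℕ → Prop}
    [DecidablePred p] (hp : ∀ k, p k → 1 < k) :
    #{j | p (S.block (S.row (τ j)))} = #{w | p (S.block w)} :=
  card_filter_comp_of_forall_mem_range (τ.toEmbedding.trans S.row) (fun w => p (S.block w))
    fun w hw => by
      obtain ⟨i, rfl⟩ := (S.mem_range_row w).2 (hp _ hw)
      exact ⟨τ.symm i, by simp⟩

theorem Admissible.card_crossings (hτ : S.Admissible τ) {k : ℕ} (hk : 1 < k)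
    (hkl : k ≤ S.numBlocks) :
    #{j | S.block (S.col j) < k ∧ k ≤ S.block (S.row (τ j))} = S.size 1 := by
  classical
  have hcol : #{j | S.block (S.col j) < k} = #{w | S.block w < k} :=
    S.card_filter_col fun _ h => lt_of_lt_of_le h hkl
  have hrow : #{j | 1 < S.block (S.row (τ j)) ∧ S.block (S.row (τ j)) < k} =
      #{w | 1 < S.block w ∧ S.block w < k} :=
    S.card_filter_row_apply τ (p := fun i => 1 < i ∧ i < k) fun _ h => h.1
  have hcol_split : #{j | S.block (S.col j) < k} =
      #{j | S.block (S.col j) < k ∧ k ≤ S.block (S.row (τ j))} +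
        #{j | 1 < S.block (S.row (τ j)) ∧ S.block (S.row (τ j)) < k} := by
    rw [← card_union_of_disjoint (disjoint_filter.2 fun j _ _ _ => by omega), ← filter_or]
    congr 1 with j
    have := hτ.block_le j
    have := S.one_lt_block_row (τ j)
    simp only [mem_filter_univ]
    omega
  have hvertex_split : #{w | S.block w < k} =
      S.size 1 + #{w | 1 < S.block w ∧ S.block w < k} := by
    rw [size, ← card_union_of_disjoint (disjoint_filter.2 fun j _ _ _ => by omega), ← filter_or]
    congr 1 with w
    have := (S.mem_Icc_block w).1
    simp only [mem_filter_univ]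
    omega
  omega

end Counting

section Arcs

variable [Fintype ι] [DecidableEq ι]

variable (S) in
/-- The positions of the variables in the Leibniz term of `τ`. -/
def arcs (τ : Equiv.Perm ι) : Finset (ι × ι) := {x | τ x.2 = x.1 ∧ S.IsArc x.1 x.2}

theorem mem_arcs {x : ι × ι} : x ∈ S.arcs τ ↔ τ x.2 = x.1 ∧ S.IsArc x.1 x.2 := by simp [arcs]

theorem IsArc.mem_arcs (h : S.IsArc (τ j) j) : (τ j, j) ∈ S.arcs τ :=
  BlockLayout.mem_arcs.2 ⟨rfl, h⟩

theorem Admissible.eq_of_arcs_eq (hτ : S.Admissible τ) (hτ' : S.Admissible τ')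
    (h : S.arcs τ = S.arcs τ') : τ = τ' := by
  ext j
  rcases hτ j with harc | hloop
  · exact (mem_arcs.1 (h ▸ harc.mem_arcs)).1.symm
  rcases hτ' j with harc' | hloop'
  · exact (mem_arcs.1 (h ▸ harc'.mem_arcs)).1
  · exact S.row.injective (hloop.trans hloop'.symm)

end Arcs

section Loops

variable [Fintype ι] [DecidableEq W]

variable (S) in
/-- The columns at which the Leibniz term of `τ` picks the indeterminate `t`. -/
def loops (τ : Equiv.Perm ι) : Finset ι := {j | S.IsLoop (τ j) j}

theorem mem_loops : j ∈ S.loops τ ↔ S.IsLoop (τ j) j := by simp [loops]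

theorem loops_mul_swap [DecidableEq ι] (hj : S.IsArc (τ a) j) (ha : S.IsArc (τ j) a) :
    S.loops (τ * Equiv.swap j a) = S.loops τ \ {j, a} := by
  ext x
  simp only [mem_sdiff, mem_insert, mem_singleton, mem_loops, Equiv.Perm.mul_apply]
  rcases eq_or_ne x j with rfl | hxj
  · simpa using hj.not_isLoop
  rcases eq_or_ne x a with rfl | hxa
  · simpa using ha.not_isLoop
  · simp [Equiv.swap_apply_of_ne_of_ne hxj hxa, hxj, hxa]

theorem loops_eq_insert_erase [DecidableEq ι] {a' : ι} (hj : ¬ S.IsLoop (τ j) j)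
    (hj' : ¬ S.IsLoop (τ' j) j) (ha' : ¬ S.IsLoop (τ' a') a') (ha : S.IsLoop (τ' a) a)
    (hx : ∀ x, x ≠ j → x ≠ a' → x ≠ a → τ' x = τ x) :
    S.loops τ' = insert a ((S.loops τ).erase a') := by
  ext x
  rw [mem_insert, mem_erase, mem_loops, mem_loops]
  rcases eq_or_ne x a with rfl | hxa
  · simpa using ha
  rcases eq_or_ne x a' with rfl | hxa'
  · simpa [hxa] using ha'
  rcases eq_or_ne x j with rfl | hxj
  · simp [hxa, hj, hj']
  · simp [hx x hxj hxa' hxa, hxa, hxa']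

theorem card_loops (S : BlockLayout ι W) (τ : Equiv.Perm ι) :
    #(S.loops τ) = ∑ k ∈ Ioo 1 S.numBlocks, #{j ∈ S.loops τ | S.block (S.col j) = k} := by
  refine card_eq_sum_card_fiberwise fun j hj => ?_
  rw [coe_Ioo, ← mem_loops.1 hj]
  exact ⟨S.one_lt_block_row _, mem_loops.1 hj ▸ S.block_col_lt j⟩

variable [Fintype W]

theorem Admissible.size_add_card_jumps (hτ : S.Admissible τ) {k : ℕ} (hk : 1 < k)
    (hkl : k < S.numBlocks) :
    S.size k + #{j | S.block (S.col j) < k ∧ k < S.block (S.row (τ j))} =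
      S.size 1 + #{j ∈ S.loops τ | S.block (S.col j) = k} := by
  classical
  have hsize : #{j | S.block (S.row (τ j)) = k} = S.size k :=
    S.card_filter_row_apply τ (p := (· = k)) fun _ h => h ▸ hk
  have hends : #{j | S.block (S.row (τ j)) = k} =
      #{j | S.block (S.col j) < k ∧ S.block (S.row (τ j)) = k} +
        #{j ∈ S.loops τ | S.block (S.col j) = k} := by
    rw [← card_union_of_disjoint]
    · congr 1 with j
      simp only [mem_union, mem_filter, mem_univ, true_and, mem_loops]
      refine ⟨fun hj => ?_, ?_⟩
      · rcases hτ j with harc | hloop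
        · exact .inl ⟨hj ▸ harc, hj⟩
        · exact .inr ⟨hloop, hloop ▸ hj⟩
      · rintro (hj | ⟨hloop, hj⟩)
        · exact hj.2
        · exact (congrArg S.block hloop).trans hj
    · rw [disjoint_left]
      intro j hj hj'
      simp only [mem_filter] at hj hj'
      omega
  have hcross : #{j | S.block (S.col j) < k ∧ k ≤ S.block (S.row (τ j))} =
      #{j | S.block (S.col j) < k ∧ S.block (S.row (τ j)) = k} +
        #{j | S.block (S.col j) < k ∧ k < S.block (S.row (τ j))} := by
    rw [← card_union_of_disjoint (disjoint_filter.2 fun j _ _ _ => by omega), ← filter_or]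
    congr 1 with j
    simp only [mem_filter_univ]
    omega
  have := hτ.card_crossings hk hkl.le
  omega

theorem Admissible.exists_jump (hτ : S.Admissible τ) {k : ℕ} (hk : 1 < k) (hkl : k < S.numBlocks)
    (h : S.size k < S.size 1 + #{j ∈ S.loops τ | S.block (S.col j) = k}) :
    ∃ j, S.block (S.col j) < k ∧ k < S.block (S.row (τ j)) := by
  have := hτ.size_add_card_jumps hk hkl
  obtain ⟨j, hj⟩ := card_pos.1
    (show 0 < #{j | S.block (S.col j) < k ∧ k < S.block (S.row (τ j))} by omega)
  exact ⟨j, (mem_filter.1 hj).2⟩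

variable (S) in
/-- The number `d` of loops forced by the blocks larger than the first one. -/
def excess : ℕ := ∑ k ∈ Ioo 1 S.numBlocks, (S.size k - S.size 1)

theorem Admissible.excess_le_card_loops (hτ : S.Admissible τ) : S.excess ≤ #(S.loops τ) := by
  rw [card_loops, excess]
  refine sum_le_sum fun k hk => ?_
  have := hτ.size_add_card_jumps (mem_Ioo.1 hk).1 (mem_Ioo.1 hk).2
  omega

theorem Admissible.exists_card_loops_lt (hτ : S.Admissible τ) (h : S.excess < #(S.loops τ)) :
    ∃ τ', S.Admissible τ' ∧ #(S.loops τ') < #(S.loops τ) := by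
  classical
  rw [card_loops, excess] at h
  obtain ⟨k, hk, hlt⟩ := exists_lt_of_sum_lt h
  rw [mem_Ioo] at hk
  obtain ⟨a, ha⟩ := card_pos.1 (hlt.trans_le' (Nat.zero_le _))
  obtain ⟨j, hjk, hkj⟩ := hτ.exists_jump hk.1 hk.2 (by omega)
  rw [mem_filter, mem_loops] at ha
  have hja : S.IsArc (τ a) j := by rwa [IsArc, ha.1, ha.2]
  have haj : S.IsArc (τ j) a := by rwa [IsArc, ha.2]
  refine ⟨_, hτ.mul_swap hja haj, ?_⟩
  rw [loops_mul_swap hja haj]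
  exact card_lt_card ((ssubset_iff_of_subset sdiff_subset).2 ⟨a, mem_loops.2 ha.1, by simp⟩)

variable (S) in
/-- The permutations that contribute to the coefficient of `t ^ d` in `det M(t)`; they are the
admissible permutations with the fewest loops. -/
structure Tight (τ : Equiv.Perm ι) : Prop where
  admissible : S.Admissible τ
  card_loops_eq : #(S.loops τ) = S.excess

theorem Admissible.exists_tight (hτ : S.Admissible τ) : ∃ τ', S.Tight τ' := by
  obtain ⟨τ', hτ', hmin⟩ :=
    exists_minimalFor_of_wellFoundedLT S.Admissible (fun τ => #(S.loops τ)) ⟨τ, hτ⟩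
  refine ⟨τ', hτ', hτ'.excess_le_card_loops.antisymm' (not_lt.1 fun h => ?_)⟩
  obtain ⟨τ'', hτ'', hlt⟩ := hτ'.exists_card_loops_lt h
  exact hlt.not_ge (hmin hτ'' hlt.le)

theorem Tight.mul_swap [DecidableEq ι] (hτ : S.Tight τ) (hj : S.IsArc (τ j) j)
    (ha : S.IsArc (τ a) a) (hja : S.IsArc (τ a) j) (haj : S.IsArc (τ j) a) :
    S.Tight (τ * Equiv.swap j a) where
  admissible := hτ.admissible.mul_swap hja haj
  card_loops_eq := by
    rw [loops_mul_swap hja haj, sdiff_eq_self_of_disjoint, hτ.card_loops_eq]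
    simp [mem_loops, hj.not_isLoop, ha.not_isLoop]

theorem Tight.exists_detour {a' : ι} (hτ : S.Tight τ) (hj : S.IsArc (τ j) j)
    (hja : S.IsLoop (τ j) a) (ha : S.IsArc (τ a) a) (ha' : S.IsLoop (τ a') a')
    (hblock : S.block (S.col a) = S.block (S.col a')) :
    ∃ τ', S.Tight τ' ∧ τ' j = τ a' ∧ τ' a' = τ a := by
  classical
  have hne_ja : j ≠ a := by rintro rfl; exact hj.not_isLoop hja
  have hne_ja' : j ≠ a' := by rintro rfl; exact hj.not_isLoop ha'
  have hne_aa' : a ≠ a' := by rintro rfl; exact ha.not_isLoop ha'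
  obtain ⟨τ', hτ'j, hτ'a', hτ'a, hτ'x⟩ := exists_perm_rotate τ hne_ja' hne_aa'.symm hne_ja.symm
  have hj' : S.IsArc (τ' j) j := by
    rw [hτ'j, IsArc, ha', ← hblock, ← hja]
    exact hj
  have ha'' : S.IsArc (τ' a') a' := by rwa [hτ'a', IsArc, ← hblock]
  have hloop : S.IsLoop (τ' a) a := by rwa [hτ'a]
  refine ⟨τ', ⟨fun x => ?_, ?_⟩, hτ'j, hτ'a'⟩
  · by_cases hx : x ≠ j ∧ x ≠ a' ∧ x ≠ a
    · exact hτ'x x hx.1 hx.2.1 hx.2.2 ▸ hτ.admissible x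
    · obtain rfl | rfl | rfl : x = j ∨ x = a' ∨ x = a := by tauto
      exacts [.inl hj', .inl ha'', .inr hloop]
  · have ha_notMem : a ∉ (S.loops τ).erase a' := by simp [mem_loops, ha.not_isLoop]
    rw [loops_eq_insert_erase hj.not_isLoop hj'.not_isLoop ha''.not_isLoop hloop hτ'x,
      card_insert_of_notMem ha_notMem, card_erase_add_one (mem_loops.2 ha'), hτ.card_loops_eq]

end Loops

theorem Admissible.exists_isLoop [Finite ι] [Fintype W] (hτ : S.Admissible τ) {k : ℕ}
    (hk : 1 < k) (hkl : k < S.numBlocks) (h : S.size 1 < S.size k) :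
    ∃ j, S.IsLoop (τ j) j ∧ S.block (S.col j) = k := by
  classical
  cases nonempty_fintype ι
  have := hτ.size_add_card_jumps hk hkl
  obtain ⟨j, hj⟩ := card_pos.1 (show 0 < #{j ∈ S.loops τ | S.block (S.col j) = k} by omega)
  rw [mem_filter, mem_loops] at hj
  exact ⟨j, hj⟩

section Splitting

variable [Fintype ι] [Fintype W] [DecidableEq ι] [DecidableEq W]

variable (S) in
/-- The monomials of the coefficient of `t ^ d` in `det M(t)`, as sets of positions. -/
def tightArcs : Set (Finset (ι × ι)) := S.arcs '' {τ | S.Tight τ}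

theorem Tight.arcs_mem (hτ : S.Tight τ) : S.arcs τ ∈ S.tightArcs := ⟨τ, hτ, rfl⟩

variable {G H : Finset (ι × ι)}

theorem exists_tight_of_isSplitting (h : IsSplitting S.tightArcs G H) {x y : ι × ι} (hx : x ∈ G)
    (hy : y ∈ H) : ∃ τ, S.Tight τ ∧ τ x.2 = x.1 ∧ τ y.2 = y.1 := by
  obtain ⟨_, ⟨τ, hτ, rfl⟩, hxτ, hyτ⟩ := h.exists_mem_mem hx hy
  exact ⟨τ, hτ, (mem_arcs.1 hxτ).1, (mem_arcs.1 hyτ).1⟩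

theorem snd_ne_of_isSplitting (h : IsSplitting S.tightArcs G H) {x y : ι × ι} (hx : x ∈ G)
    (hy : y ∈ H) : x.2 ≠ y.2 := fun hxy => by
  obtain ⟨τ, -, hτx, hτy⟩ := exists_tight_of_isSplitting h hx hy
  have heq : x = y := Prod.ext (by rw [← hτx, hxy, hτy]) hxy
  exact disjoint_left.1 h.disjoint hx (heq ▸ hy)

theorem fst_ne_of_isSplitting (h : IsSplitting S.tightArcs G H) {x y : ι × ι} (hx : x ∈ G)
    (hy : y ∈ H) : x.1 ≠ y.1 := fun hxy => by
  obtain ⟨τ, -, hτx, hτy⟩ := exists_tight_of_isSplitting h hx hy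
  exact snd_ne_of_isSplitting h hx hy (τ.injective (by rw [hτx, hτy, hxy]))

theorem mem_or_mem_of_isSplitting (h : IsSplitting S.tightArcs G H) (hτ : S.Tight τ)
    (hj : S.IsArc (τ j) j) : (τ j, j) ∈ G ∨ (τ j, j) ∈ H :=
  (h.mem_or_mem_iff _).2 ⟨_, hτ.arcs_mem, hj.mem_arcs⟩

theorem mem_of_crossing (h : IsSplitting S.tightArcs G H) (hτ : S.Tight τ)
    (hj : S.IsArc (τ j) j) (ha : S.IsArc (τ a) a) (hja : S.IsArc (τ a) j)
    (haj : S.IsArc (τ j) a) (hjG : (τ j, j) ∈ G) : (τ a, a) ∈ G := by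
  refine (mem_or_mem_of_isSplitting h hτ ha).resolve_right fun haH => ?_
  have hτ' := hτ.mul_swap hj ha hja haj
  have hswap : (τ * Equiv.swap j a) j = τ a := by simp
  rcases mem_or_mem_of_isSplitting h hτ' (j := j) (by rwa [hswap]) with hG | hH
  · rw [hswap] at hG
    exact fst_ne_of_isSplitting h hG haH rfl
  · exact snd_ne_of_isSplitting h hjG hH rfl

theorem mem_of_passing {a' : ι} (h : IsSplitting S.tightArcs G H) (hτ : S.Tight τ)
    (hj : S.IsArc (τ j) j) (hja : S.IsLoop (τ j) a) (ha : S.IsArc (τ a) a)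
    (ha' : S.IsLoop (τ a') a') (hblock : S.block (S.col a) = S.block (S.col a'))
    (hjG : (τ j, j) ∈ G) : (τ a, a) ∈ G := by
  refine (mem_or_mem_of_isSplitting h hτ ha).resolve_right fun haH => ?_
  -- Otherwise the detour enters its looped vertex by an arc in `G` and leaves it by one in `H`, so
  -- mixing the detour with `τ` would route a path into that vertex without any arc to leave it.
  obtain ⟨τ', hτ', hτ'j, hτ'a'⟩ := hτ.exists_detour hj hja ha ha' hblock
  have hj' : S.IsArc (τ' j) j := by
    rw [hτ'j, IsArc, ha', ← hblock, ← hja]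
    exact hj
  have ha'' : S.IsArc (τ' a') a' := by rwa [hτ'a', IsArc, ← hblock]
  have hj'G : (τ' j, j) ∈ G :=
    (mem_or_mem_of_isSplitting h hτ' hj').resolve_right fun hH =>
      snd_ne_of_isSplitting h hjG hH rfl
  have ha'H : (τ' a', a') ∈ H :=
    (mem_or_mem_of_isSplitting h hτ' ha'').resolve_left fun hG =>
      fst_ne_of_isSplitting h hG haH hτ'a'
  obtain ⟨ρ, hρ, hρarcs⟩ := h.mix_mem _ hτ'.arcs_mem _ hτ.arcs_mem
  have hρj : ρ j = τ a' := by
    have hmem : (τ' j, j) ∈ S.arcs ρ :=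
      hρarcs ▸ mem_union_left _ (mem_inter.2 ⟨hj'.mem_arcs, hj'G⟩)
    exact (mem_arcs.1 hmem).1.trans hτ'j
  have hρa'_loop : ¬ S.IsLoop (ρ a') a' := fun hloop => by
    have hja' : j = a' := ρ.injective (hρj.trans (S.row.injective (ha'.trans hloop.symm)))
    exact (hja' ▸ hj).not_isLoop ha'
  have hmem := (hρ.admissible.isArc_of_not_isLoop hρa'_loop).mem_arcs
  rw [hρarcs, mem_union, mem_inter, mem_inter] at hmem
  rcases hmem with ⟨-, hG⟩ | ⟨hτmem, -⟩
  · exact snd_ne_of_isSplitting h hG ha'H rfl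
  · exact (mem_arcs.1 hτmem).2.not_isLoop ((mem_arcs.1 hτmem).1 ▸ ha')

theorem arc_mem_of_isSplitting (h : IsSplitting S.tightArcs G H)
    (hne : ∀ k, 1 < k → k < S.numBlocks → S.size k ≠ S.size 1) (hτ : S.Tight τ)
    (hj : S.block (S.col j) = 1) (hjG : (τ j, j) ∈ G) (ha : S.IsArc (τ a) a) :
    (τ a, a) ∈ G := by
  induction hk : S.block (S.col a) using Nat.strong_induction_on generalizing a with
  | _ k ih =>
  have hkl : k < S.numBlocks := hk ▸ S.block_col_lt a
  obtain hk1 | hk1 : k = 1 ∨ 1 < k := (hk ▸ (S.mem_Icc_block (S.col a)).1).eq_or_lt'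
  · exact mem_of_crossing h hτ (isArc_of_block_col_eq_one hj _) ha (isArc_of_block_col_eq_one hj _)
      (isArc_of_block_col_eq_one (hk.trans hk1) _) hjG
  rcases (hne k hk1 hkl).lt_or_gt with hlt | hgt
  · obtain ⟨b, hbk, hkb⟩ := hτ.admissible.exists_jump hk1 hkl (by omega)
    have hb : S.IsArc (τ b) b := hbk.trans hkb
    exact mem_of_crossing h hτ hb ha (hbk.trans (hk.symm.trans_lt ha))
      (hk.trans_lt hkb) (ih _ hbk hb rfl)
  · obtain ⟨a', ha', ha'k⟩ := hτ.admissible.exists_isLoop hk1 hkl hgt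
    obtain ⟨i, hi⟩ := (S.mem_range_row (S.col a)).2 (hk ▸ hk1)
    obtain ⟨b, rfl⟩ := τ.surjective i
    have hb : S.IsArc (τ b) b := hτ.admissible.isArc_of_not_isLoop fun hloop =>
      ha.not_isLoop (S.col.injective (hloop.symm.trans hi) ▸ hloop)
    have hbk : S.block (S.col b) < k := hb.trans_eq ((congrArg S.block hi).trans hk)
    exact mem_of_passing h hτ hb hi ha ha' (hk.trans ha'k.symm) (ih _ hbk hb rfl)

theorem eq_empty_of_isSplitting (h : IsSplitting S.tightArcs G H)
    (hne : ∀ k, 1 < k → k < S.numBlocks → S.size k ≠ S.size 1) {x : ι × ι} (hxG : x ∈ G)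
    (hx : S.block (S.col x.2) = 1) : H = ∅ := by
  refine eq_empty_of_forall_notMem fun y hy => ?_
  obtain ⟨_, ⟨τ, hτ, rfl⟩, hyτ⟩ := (h.mem_or_mem_iff y).1 (.inr hy)
  have hxτ : (τ x.2, x.2) ∈ G :=
    (mem_or_mem_of_isSplitting h hτ (isArc_of_block_col_eq_one hx _)).resolve_right fun hH =>
      snd_ne_of_isSplitting h hxG hH rfl
  obtain ⟨hy_eq, hy_arc⟩ := mem_arcs.1 hyτ
  have hyG := arc_mem_of_isSplitting h hne hτ hx hxτ (a := y.2) (hy_eq ▸ hy_arc)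
  rw [hy_eq] at hyG
  exact disjoint_left.1 h.disjoint hyG hy

theorem eq_empty_or_eq_empty_of_isSplitting (h : IsSplitting S.tightArcs G H)
    (hne : ∀ k, 1 < k → k < S.numBlocks → S.size k ≠ S.size 1) (hj : S.block (S.col j) = 1) :
    G = ∅ ∨ H = ∅ := by
  obtain ⟨_, hadm⟩ := S.exists_admissible
  obtain ⟨τ, hτ⟩ := hadm.exists_tight
  exact (mem_or_mem_of_isSplitting h hτ (isArc_of_block_col_eq_one hj _)).symm.imp
    (eq_empty_of_isSplitting h.symm hne · hj) (eq_empty_of_isSplitting h hne · hj)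

end Splitting

section Minor

variable [Fintype ι] [DecidableEq W] (S) (R : Type*) [CommRing R]

/-- The matrix `M(t)` of the layout, over the polynomial ring in all positions of the minor rather
than only those that carry a variable. -/
def minor : Matrix ι ι (Polynomial (MvPolynomial (ι × ι) R)) :=
  Matrix.of fun i j =>
    Polynomial.C (if S.IsArc i j then X (i, j) else 0) + if S.IsLoop i j then Polynomial.X else 0

variable {S}

theorem prod_minor_eq_zero (hτ : ¬ S.Admissible τ) : ∏ j, S.minor R (τ j) j = 0 := by
  rw [Admissible, not_forall] at hτ
  obtain ⟨j, hj⟩ := hτ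
  rw [not_or] at hj
  exact prod_eq_zero (mem_univ j) (by simp [minor, hj.1, hj.2])

variable [DecidableEq ι]

theorem Admissible.prod_minor (hτ : S.Admissible τ) :
    ∏ j, S.minor R (τ j) j = Polynomial.monomial #(S.loops τ) (∏ x ∈ S.arcs τ, X x) := by
  have hentry (j : ι) : S.minor R (τ j) j =
      (if S.IsArc (τ j) j then Polynomial.C (X (τ j, j)) else 1) *
        if S.IsLoop (τ j) j then Polynomial.X else 1 := by
    rcases hτ j with harc | hloop
    · simp [minor, harc, harc.not_isLoop]
    · rw [minor, Matrix.of_apply, if_neg hloop.not_isArc, if_neg hloop.not_isArc, if_pos hloop,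
        if_pos hloop, Polynomial.C_0, zero_add, one_mul]
  have harcs : ∏ j with S.IsArc (τ j) j, X (τ j, j) =
      ∏ x ∈ S.arcs τ, (X x : MvPolynomial (ι × ι) R) :=
    prod_nbij' (fun j => (τ j, j)) Prod.snd (by simp [mem_arcs]) (by simp +contextual [mem_arcs])
      (by simp) (by simp +contextual [mem_arcs]) (by simp)
  rw [prod_congr rfl fun j _ => hentry j, prod_mul_distrib, ← prod_filter, ← prod_filter,
    prod_const, ← map_prod, harcs, Polynomial.C_mul_X_pow_eq_monomial, loops]

variable [Fintype W]

open Classical in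
theorem coeff_det_minor : (S.minor R).det.coeff S.excess =
    ∑ τ with S.Tight τ, C ((τ.sign : ℤ) : R) * ∏ x ∈ S.arcs τ, X x := by
  rw [Matrix.det_apply', Polynomial.finsetSum_coeff, sum_filter]
  refine sum_congr rfl fun τ _ => ?_
  rw [Polynomial.coeff_intCast_mul, map_intCast]
  by_cases hτ : S.Admissible τ
  · rw [hτ.prod_minor R, Polynomial.coeff_monomial, mul_ite, mul_zero]
    exact if_congr ⟨fun h => ⟨hτ, h⟩, Tight.card_loops_eq⟩ rfl rfl
  · rw [prod_minor_eq_zero R hτ, Polynomial.coeff_zero, mul_zero,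
      if_neg fun h => hτ h.admissible]

theorem irreducible_coeff_det_minor [IsDomain R] (hl : 1 < S.numBlocks) (h1 : 0 < S.size 1)
    (hne : ∀ k, 1 < k → k < S.numBlocks → S.size k ≠ S.size 1) :
    Irreducible ((S.minor R).det.coeff S.excess) := by
  classical
  obtain ⟨w, hw⟩ := card_pos.1 h1
  rw [mem_filter_univ] at hw
  obtain ⟨j, rfl⟩ := (S.mem_range_col w).2 (hw ▸ hl)
  obtain ⟨_, hadm⟩ := S.exists_admissible
  obtain ⟨τ, hτ⟩ := hadm.exists_tight
  rw [coeff_det_minor R]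
  refine irreducible_sum_C_mul_prod_X (fun τ₁ h₁ τ₂ h₂ h => ?_) (fun τ _ => ?_)
    ⟨τ, by simpa using hτ, _, (isArc_of_block_col_eq_one hw _).mem_arcs⟩ fun G H h => ?_
  · exact (mem_filter_univ τ₁ |>.1 h₁).admissible.eq_of_arcs_eq
      (mem_filter_univ τ₂ |>.1 h₂).admissible h
  · exact τ.sign.isUnit.map (Int.castRingHom R)
  · rw [coe_filter_univ] at h
    exact eq_empty_or_eq_empty_of_isSplitting h hne hw

end Minor

end BlockLayout

section Blocks

variable {c : ℕ → ℕ}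

theorem blkSum_succ (c : ℕ → ℕ) (j : ℕ) : blkSum c (j + 1) = blkSum c j + c (j + 1) :=
  sum_Icc_succ_top (Nat.le_add_left 1 j) c

theorem blkSum_one (c : ℕ → ℕ) : blkSum c 1 = c 1 := by simp [blkSum]

theorem blkSum_mono (c : ℕ → ℕ) : Monotone (blkSum c) :=
  monotone_nat_of_le_succ fun j => blkSum_succ c j ▸ Nat.le_add_right _ _

theorem blk_le_iff {a l : ℕ} (ha : a ≤ blkSum c l) (k : ℕ) : blk c a ≤ k ↔ a ≤ blkSum c k :=
  ⟨fun h => (Nat.sInf_mem (s := {j | a ≤ blkSum c j}) ⟨l, ha⟩).trans (blkSum_mono c h),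
    fun h => Nat.sInf_le h⟩

theorem lt_of_blk_lt {a b l : ℕ} (hb : b ≤ blkSum c l) (h : blk c b < blk c a) : b < a :=
  not_le.1 fun hab => h.not_ge <|
    (blk_le_iff (hab.trans hb) _).2 (hab.trans ((blk_le_iff hb _).1 le_rfl))

theorem card_blk_eq {l k : ℕ} (hk : k + 1 ≤ l) :
    #{w : Fin (blkSum c l) | blk c (w + 1) = k + 1} = c (k + 1) := by
  have hcard {i : ℕ} (hi : i ≤ l) : #{w : Fin (blkSum c l) | blk c (w + 1) ≤ i} = blkSum c i := by
    simp only [fun w : Fin (blkSum c l) => blk_le_iff w.2 i, Nat.succ_le_iff]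
    rw [Fin.card_filter_val_lt, min_eq_right (blkSum_mono c hi)]
  have hsplit : #{w : Fin (blkSum c l) | blk c (w + 1) ≤ k + 1} =
      #{w : Fin (blkSum c l) | blk c (w + 1) ≤ k} +
        #{w : Fin (blkSum c l) | blk c (w + 1) = k + 1} := by
    rw [← card_union_of_disjoint (disjoint_filter.2 fun w _ _ _ => by omega), ← filter_or]
    simp only [Nat.le_succ_iff]
  rw [hcard hk, hcard (Nat.le_of_succ_le hk), blkSum_succ] at hsplit
  omega

end Blocks

section BenloloSanderson

variable {c : ℕ → ℕ} {l n m : ℕ}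

section Layout

variable (hl : 0 < l) (hcl : c l = c 1) (hn : n = blkSum c l) (hm : m + c 1 = n)

/-- The block layout of the minor `M(t)`: its columns are `1, …, n - c` and its rows
`c + 1, …, n`. -/
def minorLayout : BlockLayout (Fin m) (Fin n) where
  block w := blk c (w + 1)
  numBlocks := l
  col := Fin.castLEEmb (hm ▸ Nat.le_add_right m (c 1))
  row := (Fin.addNatEmb (c 1)).trans (finCongr hm).toEmbedding
  mem_Icc_block w := by
    have hw : w.1 + 1 ≤ blkSum c l := hn ▸ w.2
    have h0 : blk c (w + 1) ≤ 0 ↔ w.1 + 1 ≤ 0 := blk_le_iff hw 0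
    exact ⟨by omega, (blk_le_iff hw l).2 hw⟩
  mem_range_col w := by
    obtain ⟨k, rfl⟩ := Nat.exists_eq_succ_of_ne_zero hl.ne'
    have hw : w.1 + 1 ≤ blkSum c (k + 1) := hn ▸ w.2
    have hmk : m = blkSum c k := by
      rw [Nat.succ_eq_add_one] at hn hcl
      rw [blkSum_succ, hcl] at hn
      omega
    rw [Nat.lt_succ_iff, blk_le_iff hw, ← hmk]
    refine ⟨?_, fun h => ⟨⟨w, h⟩, rfl⟩⟩
    rintro ⟨j, rfl⟩
    exact j.2
  mem_range_row w := by
    have hw : w.1 + 1 ≤ blkSum c l := hn ▸ w.2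
    rw [← not_le, blk_le_iff hw, blkSum_one, Nat.succ_le_iff, not_lt]
    refine ⟨?_, fun h => ⟨⟨w - c 1, by omega⟩, Fin.ext (Nat.sub_add_cancel h)⟩⟩
    rintro ⟨i, rfl⟩
    exact Nat.le_add_left _ _

theorem size_minorLayout {k : ℕ} (hk : 1 ≤ k) (hkl : k ≤ l) :
    (minorLayout hl hcl hn hm).size k = c k := by
  obtain ⟨k, rfl⟩ := Nat.exists_eq_add_of_le' hk
  subst hn
  exact card_blk_eq hkl

theorem excess_minorLayout : (minorLayout hl hcl hn hm).excess = dBS c l := by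
  rw [dBS, ← sum_subset (Ioo_subset_Icc_self : Ioo 1 l ⊆ Icc 1 l)]
  · refine sum_congr rfl fun k hk => ?_
    rw [mem_Ioo] at hk
    rw [size_minorLayout hl hcl hn hm hk.1.le hk.2.le, size_minorLayout hl hcl hn hm le_rfl hl]
  · intro k hk hk'
    rw [mem_Icc] at hk
    rw [mem_Ioo] at hk'
    obtain rfl | rfl : k = 1 ∨ k = l := by omega
    · exact Nat.sub_self _
    · rw [hcl, Nat.sub_self]

theorem mem_range_row_col (v : Pos c n) : v.1 ∈ Set.range
    (Prod.map (minorLayout hl hcl hn hm).row (minorLayout hl hcl hn hm).col) := by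
  set S := minorLayout hl hcl hn hm
  have hlt : S.block v.1.2 < S.block v.1.1 := v.2.2
  rw [Set.range_prodMap]
  exact ⟨(S.mem_range_row _).2 ((S.mem_Icc_block _).1.trans_lt hlt),
    (S.mem_range_col _).2 (hlt.trans_le (S.mem_Icc_block _).2)⟩

/-- The position in the minor `M(t)` of a coordinate of the nilradical. -/
def minorPosition (v : Pos c n) : Fin m × Fin m := (mem_range_row_col hl hcl hn hm v).choose

theorem map_row_col_minorPosition (v : Pos c n) :
    Prod.map (minorLayout hl hcl hn hm).row (minorLayout hl hcl hn hm).col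
      (minorPosition hl hcl hn hm v) = v.1 :=
  (mem_range_row_col hl hcl hn hm v).choose_spec

theorem minorPosition_injective : Function.Injective (minorPosition hl hcl hn hm) := fun v w h =>
  Subtype.ext <| by rw [← map_row_col_minorPosition hl hcl hn hm v, h, map_row_col_minorPosition]

end Layout

variable (K : Type*) [CommRing K]

/-- The generic matrix `𝒳` of the nilradical over an arbitrary coefficient ring. -/
def nilradicalMatrix (c : ℕ → ℕ) (n : ℕ) : Matrix (Fin n) (Fin n) (MvPolynomial (Pos c n) K) :=
  Matrix.of fun a b =>
    if h : b < a ∧ blk c (b.1 + 1) < blk c (a.1 + 1) then X (⟨(a, b), h⟩ : Pos c n) else 0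

/-- The minor `M(t)` of `𝒳 + t · Id` over an arbitrary coefficient ring. -/
def shiftedMinor (c : ℕ → ℕ) (n m : ℕ) (h : m + c 1 = n) :
    Matrix (Fin m) (Fin m) (Polynomial (MvPolynomial (Pos c n) K)) :=
  Matrix.of fun i j =>
    Polynomial.C (nilradicalMatrix K c n (Fin.cast h (i.addNat (c 1)))
        (Fin.castLE (le_trans (Nat.le_add_right m (c 1)) (le_of_eq h)) j))
      + if (Fin.cast h (i.addNat (c 1)) : Fin n)
            = Fin.castLE (le_trans (Nat.le_add_right m (c 1)) (le_of_eq h)) j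
        then Polynomial.X else 0

/-- The Benlolo–Sanderson element over an arbitrary coefficient ring. -/
def benloloSanderson (c : ℕ → ℕ) (l n m : ℕ) (h : m + c 1 = n) : MvPolynomial (Pos c n) K :=
  (shiftedMinor K c n m h).det.coeff (dBS c l)

section Rename

variable (hl : 0 < l) (hcl : c l = c 1) (hn : n = blkSum c l) (hm : m + c 1 = n)

theorem rename_nilradicalMatrix (i j : Fin m) :
    rename (minorPosition hl hcl hn hm) (nilradicalMatrix K c n
      ((minorLayout hl hcl hn hm).row i) ((minorLayout hl hcl hn hm).col j)) =
        if (minorLayout hl hcl hn hm).IsArc i j then X (i, j) else 0 := by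
  set S := minorLayout hl hcl hn hm
  by_cases harc : S.IsArc i j
  · have hcol : (S.col j).1 + 1 ≤ blkSum c l := (S.col j).2.trans_eq hn
    have hpos : S.col j < S.row i ∧ blk c ((S.col j).1 + 1) < blk c ((S.row i).1 + 1) :=
      ⟨Nat.lt_of_succ_lt_succ (lt_of_blk_lt hcol harc), harc⟩
    have hposition : minorPosition hl hcl hn hm ⟨(S.row i, S.col j), hpos⟩ = (i, j) :=
      (S.row.injective.prodMap S.col.injective) (map_row_col_minorPosition hl hcl hn hm _)
    rw [nilradicalMatrix, Matrix.of_apply, dif_pos hpos, if_pos harc, rename_X,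
      hposition]
  · rw [nilradicalMatrix, Matrix.of_apply, dif_neg fun h => harc h.2, if_neg harc, map_zero]

theorem map_rename_shiftedMinor :
    (Polynomial.mapRingHom (rename (minorPosition hl hcl hn hm) : _ →ₐ[K] _).toRingHom).mapMatrix
      (shiftedMinor K c n m hm) =
      (minorLayout hl hcl hn hm).minor K := by
  refine Matrix.ext fun i j => ?_
  have hentry : shiftedMinor K c n m hm i j =
      Polynomial.C (nilradicalMatrix K c n ((minorLayout hl hcl hn hm).row i)
        ((minorLayout hl hcl hn hm).col j)) +
          if (minorLayout hl hcl hn hm).IsLoop i j then Polynomial.X else 0 := rfl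
  rw [RingHom.mapMatrix_apply, Matrix.map_apply, hentry, map_add, Polynomial.coe_mapRingHom,
    Polynomial.map_C, apply_ite (Polynomial.map _), Polynomial.map_X, Polynomial.map_zero]
  exact congrArg (Polynomial.C · + _) (rename_nilradicalMatrix K hl hcl hn hm i j)

theorem rename_benloloSanderson :
    rename (minorPosition hl hcl hn hm) (benloloSanderson K c l n m hm) =
      ((minorLayout hl hcl hn hm).minor K).det.coeff (minorLayout hl hcl hn hm).excess := by
  rw [excess_minorLayout, ← map_rename_shiftedMinor K hl hcl hn hm, ← RingHom.map_det]
  exact (Polynomial.coeff_map _ _).symm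

end Rename

theorem BS_element_irreducible_general [IsDomain K] (hl : 2 ≤ l) (hc : 0 < c 1) (hcl : c l = c 1)
    (hn : n = blkSum c l) (hm : m + c 1 = n) (hcne : ∀ j, 1 < j → j < l → c j ≠ c 1) :
    Irreducible (benloloSanderson K c l n m hm) := by
  have hl0 : 0 < l := by omega
  have hsize {k : ℕ} (hk : 1 ≤ k) (hkl : k ≤ l) : (minorLayout hl0 hcl hn hm).size k = c k :=
    size_minorLayout hl0 hcl hn hm hk hkl
  have hinj := minorPosition_injective hl0 hcl hn hm
  have : IsLocalHom (rename (R := K) (minorPosition hl0 hcl hn hm)) :=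
    isLocalHom_of_leftInverse (killCompl hinj) (killCompl_rename_app hinj)
  refine Irreducible.of_map (f := rename (R := K) (minorPosition hl0 hcl hn hm)) ?_
  rw [rename_benloloSanderson K hl0 hcl hn hm]
  refine BlockLayout.irreducible_coeff_det_minor K hl (by rwa [hsize le_rfl hl0])
    fun k hk hkl => ?_
  rw [hsize hk.le hkl.le, hsize le_rfl hl0]
  exact hcne k hk hkl

end BenloloSanderson

/-- Proposition 3.15: if `c_j ≠ c` for all `1 < j < l`, the Benlolo–Sanderson element is
irreducible in the polynomial ring `R = ℂ[x_{ab} : (a,b) ∈ P]`. -/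
theorem BS_element_irreducible
    (l : ℕ) (hl : 2 ≤ l) (c : ℕ → ℕ) (hc : ∀ i ∈ Finset.Icc 1 l, 0 < c i)
    (hcl : c l = c 1) (n : ℕ) (hn : n = blkSum c l) (m : ℕ) (hm : m + c 1 = n)
    (hcne : ∀ j, 1 < j → j < l → c j ≠ c 1) :
    Irreducible (BSf c l n m hm) :=
  BS_element_irreducible_general ℂ hl (hc 1 (by simp; omega)) hcl hn hm hcne

end
end

section
/- Let K be a field, σ and τ types, and f ∈ K[x_i : i ∈ σ] a multilinear polynomial, i.e., of degree at most 1 in each single variable. Let f̃ ∈ K[x_i, y_j : i ∈ σ, j ∈ τ] be the image of f under the inclusion of polynomial rings (renaming along σ ↪ σ ⊕ τ). Then the ideal of K[x_i, y_j : i ∈ σ, j ∈ τ] generated by f̃ together with all the variables y_j (j ∈ τ) is a radical ideal. -/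
/-!
The substitution `y_j ↦ 0` is a retraction of `K[x_i, y_j]` onto `K[x_i]` with kernel `(y_j)`, so
`(f, y_j)` is the preimage of `(f)`, and preimages of radical ideals are radical. It remains that a
nonzero multilinear `f` is squarefree: if `g ^ 2 ∣ f` then `2 deg_{x_i} g ≤ 1` for all `i`, so `g`
is constant.
-/

section SquareDivisors

open MvPolynomial

variable {R σ : Type*} [CommSemiring R]

theorem eq_C_of_forall_degreeOf_eq_zero {p : MvPolynomial σ R} (hp : ∀ i, degreeOf i p = 0) :
    p = C (coeff 0 p) :=
  totalDegree_eq_zero_iff_eq_C.mp <| (totalDegree_eq_zero_iff _ p).mpr fun _ hm i ↦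
    Nat.le_zero.mp <| (monomial_le_degreeOf i hm).trans_eq (hp i)

theorem degreeOf_eq_zero_of_mul_self_dvd [NoZeroDivisors R] {f g : MvPolynomial σ R} {i : σ}
    (hf₀ : f ≠ 0) (hf : degreeOf i f ≤ 1) (hgf : g * g ∣ f) : degreeOf i g = 0 := by
  obtain ⟨h, rfl⟩ := hgf
  have hgg : g * g ≠ 0 := left_ne_zero_of_mul hf₀
  have hg : g ≠ 0 := left_ne_zero_of_mul hgg
  rw [degreeOf_mul_eq hgg (right_ne_zero_of_mul hf₀), degreeOf_mul_eq hg hg] at hf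
  lia

theorem eq_C_of_mul_self_dvd [NoZeroDivisors R] {f g : MvPolynomial σ R} (hf₀ : f ≠ 0)
    (hf : ∀ i, degreeOf i f ≤ 1) (hgf : g * g ∣ f) : g = C (coeff 0 g) :=
  eq_C_of_forall_degreeOf_eq_zero fun i ↦ degreeOf_eq_zero_of_mul_self_dvd hf₀ (hf i) hgf

theorem squarefree_of_degreeOf_le_one {K : Type*} [Field K] {f : MvPolynomial σ K} (hf₀ : f ≠ 0)
    (hf : ∀ i, degreeOf i f ≤ 1) : Squarefree f := by
  intro g hgf
  have hg₀ : g ≠ 0 := left_ne_zero_of_mul (ne_zero_of_dvd_ne_zero hf₀ hgf)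
  have hgC : g = C (coeff 0 g) := eq_C_of_mul_self_dvd hf₀ hf hgf
  have hc : coeff 0 g ≠ 0 := fun hc ↦ hg₀ (by rw [hgC, hc, C_0])
  exact isUnit_iff_eq_C_of_isReduced.mpr ⟨coeff 0 g, hc.isUnit, hgC⟩

theorem isRadical_of_degreeOf_le_one {K : Type*} [Field K] {f : MvPolynomial σ K}
    (hf : ∀ i, degreeOf i f ≤ 1) : IsRadical f :=
  isRadical_iff_squarefree_or_zero.mpr <| or_iff_not_imp_right.mpr fun hf₀ ↦
    squarefree_of_degreeOf_le_one hf₀ hf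

end SquareDivisors

section Retraction

open MvPolynomial

variable {R σ τ : Type*} {e : σ → τ}

theorem ker_killCompl [CommSemiring R] (he : e.Injective) :
    RingHom.ker (killCompl (R := R) he) = Ideal.span (X '' (Set.range e)ᶜ) := by
  apply le_antisymm
  · intro p hp
    rw [mem_ideal_span_X_image]
    intro m hm
    by_contra! hvars
    have hsupp : (m.support : Set τ) ⊆ Set.range e := fun j hj ↦
      not_not.mp fun hje ↦ Finsupp.mem_support_iff.mp hj (hvars j hje)
    have hcoeff : coeff m p = 0 := by
      rw [← Finsupp.mapDomain_comapDomain e he m hsupp, ← coeff_killCompl he,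
        RingHom.mem_ker.mp hp, coeff_zero]
    exact mem_support_iff.mp hm hcoeff
  · rw [Ideal.span_le]
    rintro _ ⟨j, hj, rfl⟩
    exact (aeval_X _ j).trans (dif_neg hj)

variable [CommRing R]

theorem comap_killCompl (he : e.Injective) (I : Ideal (MvPolynomial σ R)) :
    I.comap (killCompl he) = I.map (rename e) ⊔ Ideal.span (X '' (Set.range e)ᶜ) := by
  have hsurj : Function.Surjective (killCompl (R := R) he) := fun p ↦
    ⟨rename e p, killCompl_rename_app he p⟩
  have hmap : (I.map (rename e)).map (killCompl he) = I := by
    rw [Ideal.map_mapₐ, killCompl_comp_rename]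
    exact Ideal.map_id I
  rw [← ker_killCompl he, RingHom.ker, ← Ideal.comap_map_of_surjective _ hsurj, hmap]

theorem isRadical_map_rename_sup_span_X (he : e.Injective) {I : Ideal (MvPolynomial σ R)}
    (hI : I.IsRadical) :
    (I.map (rename e) ⊔ Ideal.span (X '' (Set.range e)ᶜ)).IsRadical := by
  rw [← comap_killCompl he]
  exact hI.comap _

end Retraction

/-- Proposition 3.3 (ii): if `f` is a multilinear polynomial in the variables `x_i (i ∈ σ)`
over a field, then the ideal of `K[x_i, y_j : i ∈ σ, j ∈ τ]` generated by (the image of) `f`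
together with all the variables `y_j (j ∈ τ)` is radical. -/
theorem span_multilinear_union_vars_isRadical
    {K : Type*} [Field K] {σ τ : Type*} (f : MvPolynomial σ K)
    (hf : ∀ i : σ, MvPolynomial.degreeOf i f ≤ 1) :
    (Ideal.span
        (insert (MvPolynomial.rename (Sum.inl : σ → σ ⊕ τ) f)
          (Set.range fun j : τ => (MvPolynomial.X (Sum.inr j) : MvPolynomial (σ ⊕ τ) K)))).IsRadical := by
  have hspan : (Ideal.span {f}).IsRadical :=
    isRadical_iff_span_singleton.mp (isRadical_of_degreeOf_le_one hf)
  have hsup := isRadical_map_rename_sup_span_X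
    (Sum.inl_injective : Function.Injective (Sum.inl : σ → σ ⊕ τ)) hspan
  rwa [Ideal.map_span, Set.image_singleton, Set.compl_range_inl, ← Set.range_comp,
    ← Ideal.span_insert] at hsup
end
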